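/- arXiv:math/0303086 — 2 statements merged into one kernel-verified Lean document; each statement's English description precedes it below -/
import Mathlib

section
/- Let (R,m) be a non-Gorenstein Noetherian local ring with m³ = (0), m² ≠ (0), and let M be a nonfree indecomposable finitely generated R-module of G-dimension zero with M* = Hom_R(M,R). Then the lengths satisfy ℓ_R(M*) = ℓ_R(M). -/
open CategoryTheory

noncomputable abbrev ExtGrp (R : Type) [CommRing R] (M N : Type) [AddCommGroup M] [Module R M]
    [AddCommGroup N] [Module R N] (i : ℕ) : Type :=
  ((Ext R (ModuleCat R) i).obj (Opposite.op (ModuleCat.of R M))).obj (ModuleCat.of R N)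

/-- G-dimension zero. -/
def GDimZero (R : Type) [CommRing R] (M : Type) [AddCommGroup M] [Module R M] : Prop :=
  Function.Bijective (Module.Dual.eval R M) ∧
  (∀ i : ℕ, 0 < i → Subsingleton (ExtGrp R M R i)) ∧
  (∀ i : ℕ, 0 < i → Subsingleton (ExtGrp R (Module.Dual R M) R i))

/-- finite self-injective dimension -/
def HasFiniteSelfInjDim (R : Type) [CommRing R] : Prop :=
  ∃ n : ℕ, ∀ (N : ModuleCat R) (i : ℕ), n < i →
    Subsingleton (((Ext R (ModuleCat R) i).obj (Opposite.op N)).obj (ModuleCat.of R R))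

/-- Gorenstein local ring -/
def IsGorensteinLocalRing (R : Type) [CommRing R] : Prop :=
  IsNoetherianRing R ∧ IsLocalRing R ∧ HasFiniteSelfInjDim R

/-- length of a module, as Krull dimension of its submodule lattice -/
noncomputable def mlength (R : Type) [CommRing R] (M : Type) [AddCommGroup M] [Module R M] :
    WithBot ℕ∞ :=
  Order.krullDim (Submodule R M)

/-- An indecomposable (nonzero) module: it is not a direct sum of two proper submodules. -/
def IsIndecomposableModule (R : Type) [CommRing R] (M : Type) [AddCommGroup M]
    [Module R M] : Prop :=
  (⊥ : Submodule R M) ≠ ⊤ ∧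
    ∀ N₁ N₂ : Submodule R M, IsCompl N₁ N₂ → N₁ = ⊥ ∨ N₂ = ⊥

/-- the type of a local ring: length of Hom(k, R) -/
noncomputable def typeLen (R : Type) [CommRing R] [IsLocalRing R] : WithBot ℕ∞ :=
  mlength R ((R ⧸ IsLocalRing.maximalIdeal R) →ₗ[R] R)

/-!
Write `k` for the residue field. If some `M → R` has a unit among its values, a copy of `R` splits
off `M`; if some socle element of `M` lies outside `𝔪 M`, a copy of `k` splits off. The splittings
are handled by induction on the length; a reflexive `k` satisfies `ℓ(k*) = 1`.

Otherwise the pairing `M* × M → R` takes values in `𝔪`, so `𝔪³ = 0` makes `𝔪 M` and `𝔪 M*` equal to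
the socles of `M` and `M*`. By the pairing, the socle of `M` is the dual of `M* / 𝔪 M*`, whence
`ℓ(M) = ν(M) + ν(M*) r`, where `ν` is the minimal number of generators and `r = ℓ(k*)`, and likewise
for `M*`. As `Ext¹(M, R) = 0`, applying `Hom(-, R)` to a minimal cover of `M` and to its restriction
to the preimage of `𝔪 M` gives a linear relation between `ν(M)` and `ν(M*)`, and `Ext¹(M*, R) = 0`
gives the one with `M` and `M*` exchanged. Eliminating, `ν(M) = ν(M*)` or `r = 1`.
-/

open IsLocalRing (maximalIdeal ResidueField)

universe u

/-- The vanishing of `Ext¹_R(N, A)`, in terms of the same derived functor `Ext` as `ExtGrp`. -/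
def ExtOneVanishes (R : Type u) [CommRing R] (N A : Type u) [AddCommGroup N] [Module R N]
    [AddCommGroup A] [Module R A] : Prop :=
  Subsingleton (((Ext R (ModuleCat.{u} R) 1).obj (.op (.of R N))).obj (.of R A))

lemma lcomp_subtype_ker_surjective_of_projective {R N A P F : Type*} [CommRing R]
    [AddCommGroup N] [Module R N] [AddCommGroup A] [Module R A]
    [AddCommGroup P] [Module R P] [Module.Projective R P]
    [AddCommGroup F] [Module R F] [Module.Projective R F]
    {q : P →ₗ[R] N} (hq : Function.Surjective q)
    (h : Function.Surjective (LinearMap.lcomp R A (LinearMap.ker q).subtype))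
    {p : F →ₗ[R] N} (hp : Function.Surjective p) :
    Function.Surjective (LinearMap.lcomp R A (LinearMap.ker p).subtype) := by
  obtain ⟨α, hα⟩ := Module.projective_lifting_property p q hp
  obtain ⟨β, hβ⟩ := Module.projective_lifting_property q p hq
  replace hα (x) : p (α x) = q x := LinearMap.congr_fun hα x
  replace hβ (x) : q (β x) = p x := LinearMap.congr_fun hβ x
  let α' : LinearMap.ker q →ₗ[R] LinearMap.ker p := α.restrict fun x hx => by
    rwa [LinearMap.mem_ker, hα]
  let γ : F →ₗ[R] LinearMap.ker p := LinearMap.codRestrict _ (.id - α ∘ₗ β) fun x => by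
    simp [hα, hβ]
  intro φ
  obtain ⟨ψ, hψ⟩ := h (φ ∘ₗ α')
  refine ⟨ψ ∘ₗ β + φ ∘ₗ γ, LinearMap.ext fun x => ?_⟩
  have hβx : β x ∈ LinearMap.ker q := by rw [LinearMap.mem_ker, hβ, x.2]
  have hψx : ψ (β x) = φ (α' ⟨β x, hβx⟩) := LinearMap.congr_fun hψ ⟨β x, hβx⟩
  have hx : α' ⟨β x, hβx⟩ + γ x = x := Subtype.ext (add_sub_cancel (α (β x)) (x : F))
  change ψ (β x) + φ (γ x) = φ x
  rw [hψx, ← map_add, hx]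

section Ext

variable {R : Type u} [CommRing R] {N A : Type u} [AddCommGroup N] [Module R N]
  [AddCommGroup A] [Module R A]

lemma ExtOneVanishes.of_retract {Q : Type u} [AddCommGroup Q] [Module R Q]
    (h : ExtOneVanishes R N A) (f : N →ₗ[R] Q) (g : Q →ₗ[R] N) (hfg : f ∘ₗ g = .id) :
    ExtOneVanishes R Q A := by
  let E := (Ext R (ModuleCat.{u} R) 1).flip.obj (.of R A)
  let r : Retract (ModuleCat.of R Q) (ModuleCat.of R N) :=
    ⟨ModuleCat.ofHom g, ModuleCat.ofHom f, ModuleCat.hom_ext hfg⟩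
  have : Subsingleton (E.obj (.op (.of R N))) := h
  have hE : Function.LeftInverse (E.map r.i.op) (E.map r.r.op) := fun x => by
    simp [← ConcreteCategory.comp_apply, ← Functor.map_comp, ← op_comp, r.retract]
  exact hE.injective.subsingleton

/-- `Ext¹(N, A)` is the first cohomology of `Hom(P, A)`, and a map `ker (P₀ → N) → A`
composed with `P₁ → ker (P₀ → N)` is a cocycle. -/
lemma ExtOneVanishes.lcomp_subtype_ker_resolution_surjective (h : ExtOneVanishes R N A)
    (P : ProjectiveResolution (ModuleCat.of R N)) :
    Function.Surjective (LinearMap.lcomp R A (LinearMap.ker (P.π.f 0).hom).subtype) := by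
  have hExt : (P.complex.linearYonedaObj R (ModuleCat.of R A)).ExactAt 1 := by
    rw [HomologicalComplex.exactAt_iff_isZero_homology]
    have : Subsingleton _ := h
    exact (ModuleCat.isZero_of_subsingleton _).of_iso (P.isoExt 1 (ModuleCat.of R A)).symm
  rw [HomologicalComplex.exactAt_iff' _ 0 1 2 (by simp) (by simp),
    ShortComplex.moduleCat_exact_iff] at hExt
  let d : P.complex.X 1 →ₗ[R] LinearMap.ker (P.π.f 0).hom :=
    LinearMap.codRestrict _ (P.complex.d 1 0).hom fun y =>
      congr($(P.complex_d_comp_π_f_zero).hom y)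
  have hd : Function.Surjective d := fun x => by
    obtain ⟨y, hy⟩ := (ShortComplex.moduleCat_exact_iff _).1 P.exact₀ x.1 x.2
    exact ⟨y, Subtype.ext hy⟩
  have hdd : d ∘ₗ (P.complex.d 2 1).hom = 0 := LinearMap.ext fun y => Subtype.ext
    congr($(P.complex.d_comp_d 2 1 0).hom y)
  intro φ
  obtain ⟨ψ, hψ⟩ := hExt (ModuleCat.ofHom (φ ∘ₗ d)) <| ModuleCat.hom_ext <| by
    change (φ ∘ₗ d) ∘ₗ (P.complex.d 2 1).hom = 0
    rw [LinearMap.comp_assoc, hdd, LinearMap.comp_zero]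
  replace hψ : P.complex.d 1 0 ≫ ψ = ModuleCat.ofHom (φ ∘ₗ d) := hψ
  refine ⟨ModuleCat.Hom.hom ψ, LinearMap.ext fun x => ?_⟩
  obtain ⟨y, rfl⟩ := hd x
  exact congr($(hψ).hom y)

lemma ExtOneVanishes.lcomp_subtype_ker_surjective (h : ExtOneVanishes R N A)
    {F : Type*} [AddCommGroup F] [Module R F] [Module.Projective R F] {p : F →ₗ[R] N}
    (hp : Function.Surjective p) :
    Function.Surjective (LinearMap.lcomp R A (LinearMap.ker p).subtype) := by
  let P := projectiveResolution (ModuleCat.of R N)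
  have : Module.Projective R (P.complex.X 0) := (IsProjective.iff_projective _).2 (P.projective 0)
  have hπ : Function.Surjective (P.π.f 0).hom := (ModuleCat.epi_iff_surjective _).1 inferInstance
  exact lcomp_subtype_ker_surjective_of_projective (N := N) hπ
    (h.lcomp_subtype_ker_resolution_surjective P) hp

end Ext

section LengthHom

variable {R A B C : Type*} [CommRing R] [AddCommGroup A] [Module R A] [AddCommGroup B] [Module R B]
  [AddCommGroup C] [Module R C]

lemma length_eq_length_submodule_add_length_quotient (S : Submodule R A) :
    Module.length R A = Module.length R S + Module.length R (A ⧸ S) :=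
  Module.length_eq_add_of_exact S.subtype S.mkQ S.injective_subtype S.mkQ_surjective
    (LinearMap.exact_subtype_mkQ S)

variable (A)

lemma length_pi_linearMap (ι : Type*) [Fintype ι] :
    Module.length R ((ι → B) →ₗ[R] A) = Fintype.card ι * Module.length R (B →ₗ[R] A) := by
  classical
  rw [← (LinearMap.lsum R (fun _ : ι => B) R (M := A)).length_eq, Module.length_pi,
    ENat.card_eq_coe_fintype_card]

variable {A} {p : B →ₗ[R] C}

lemma length_linearMap_eq_add_of_surjective (hp : Function.Surjective p)
    (hext : Function.Surjective (LinearMap.lcomp R A (LinearMap.ker p).subtype)) :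
    Module.length R (B →ₗ[R] A) =
      Module.length R (C →ₗ[R] A) + Module.length R (LinearMap.ker p →ₗ[R] A) :=
  Module.length_eq_add_of_exact (LinearMap.lcomp R A p)
    (LinearMap.lcomp R A (LinearMap.ker p).subtype)
    (LinearMap.lcomp_injective_of_surjective _ hp) hext
    (LinearMap.exact_lcomp_of_exact_of_surjective _ p.exact_subtype_ker_map hp)

lemma length_linearMap_add_length_map_linearMap (hp : Function.Surjective p)
    (hext : Function.Surjective (LinearMap.lcomp R A (LinearMap.ker p).subtype))
    {S : Submodule R B} (hS : LinearMap.ker p ≤ S) :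
    Module.length R (B →ₗ[R] A) + Module.length R (S.map p →ₗ[R] A) =
      Module.length R (S →ₗ[R] A) + Module.length R (C →ₗ[R] A) := by
  let q := p.submoduleMap S
  have hker : LinearMap.ker q = (LinearMap.ker p).comap S.subtype :=
    Submodule.ext fun x => Subtype.ext_iff
  let e : LinearMap.ker q ≃ₗ[R] LinearMap.ker p :=
    LinearEquiv.ofEq _ _ hker ≪≫ₗ Submodule.comapSubtypeEquivOfLe hS
  have hqext : Function.Surjective (LinearMap.lcomp R A (LinearMap.ker q).subtype) := fun φ => by
    obtain ⟨ψ, hψ⟩ := hext (φ ∘ₗ e.symm)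
    refine ⟨ψ ∘ₗ S.subtype, LinearMap.ext fun x => ?_⟩
    exact (LinearMap.congr_fun hψ (e x)).trans (congrArg φ (e.symm_apply_apply x))
  rw [length_linearMap_eq_add_of_surjective hp hext, length_linearMap_eq_add_of_surjective
    (p.submoduleMap_surjective S) hqext, (e.congrLeft A R).length_eq]
  ring

end LengthHom

lemma isTorsionBySet_linearMap {R V : Type*} [CommRing R] [AddCommGroup V] [Module R V]
    {s : Set R} (hV : Module.IsTorsionBySet R V s) (A : Type*) [AddCommGroup A] [Module R A] :
    Module.IsTorsionBySet R (V →ₗ[R] A) s := fun f a =>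
  LinearMap.ext fun v => by
    rw [LinearMap.smul_apply, ← map_smul, hV, map_zero, LinearMap.zero_apply]

section ResidueField

variable {R : Type*} [CommRing R] [IsLocalRing R]

variable (R) in
lemma isTorsionBySet_residueField :
    Module.IsTorsionBySet R (ResidueField R) (maximalIdeal R) :=
  (Module.isTorsionBySet_quotient_iff _ _).2 fun _ _ h => Ideal.mul_mem_right _ _ h

lemma exists_linearEquiv_pi_residueField {V : Type*} [AddCommGroup V] [Module R V]
    [Module.Finite R V] (hV : Module.IsTorsionBySet R V (maximalIdeal R)) :
    ∃ n : ℕ, Nonempty (V ≃ₗ[R] (Fin n → ResidueField R)) := by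
  let : Module (R ⧸ maximalIdeal R) V := hV.module
  let : Module (ResidueField R) V := hV.module
  have : IsScalarTower R (ResidueField R) V := hV.isScalarTower
  have : Module.Finite (ResidueField R) V := Module.Finite.of_restrictScalars_finite R _ V
  exact ⟨_, ⟨(Module.finBasis (ResidueField R) V).equivFun.restrictScalars R⟩⟩

variable (R) in
lemma length_residueField : Module.length R (ResidueField R) = 1 := by
  have : IsSimpleModule R (ResidueField R) :=
    isSimpleModule_iff_isCoatom.2 (IsLocalRing.maximalIdeal.isMaximal R).out
  exact Module.length_eq_one R _

lemma length_pi_residueField (n : ℕ) : Module.length R (Fin n → ResidueField R) = n := by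
  simp [length_residueField]

lemma length_linearMap_of_isTorsionBySet_maximalIdeal {V : Type*} [AddCommGroup V] [Module R V]
    [Module.Finite R V] (hV : Module.IsTorsionBySet R V (maximalIdeal R))
    (A : Type*) [AddCommGroup A] [Module R A] :
    Module.length R (V →ₗ[R] A) =
      Module.length R V * Module.length R (ResidueField R →ₗ[R] A) := by
  obtain ⟨n, ⟨e⟩⟩ := exists_linearEquiv_pi_residueField hV
  rw [(e.congrLeft A R).length_eq, length_pi_linearMap, e.length_eq, length_pi_residueField,
    Fintype.card_fin]

lemma exists_linearMap_residueField_apply_eq_one {N : Type*} [AddCommGroup N] [Module R N]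
    [Module.Finite R N] {x : N} (hx : x ∉ maximalIdeal R • (⊤ : Submodule R N)) :
    ∃ φ : N →ₗ[R] ResidueField R, φ x = 1 := by
  obtain ⟨n, ⟨e⟩⟩ := exists_linearEquiv_pi_residueField
    (Module.isTorsionBySet_quotient_ideal_smul N (maximalIdeal R))
  let v : N →ₗ[R] Fin n → ResidueField R := e.toLinearMap ∘ₗ Submodule.mkQ _
  have hv : v x ≠ 0 := by
    rwa [Ne, LinearMap.comp_apply, LinearEquiv.coe_coe, e.map_eq_zero_iff, Submodule.mkQ_apply,
      Submodule.Quotient.mk_eq_zero]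
  obtain ⟨i, hi⟩ := Function.ne_iff.1 hv
  exact ⟨LinearMap.mulLeft R (v x i)⁻¹ ∘ₗ LinearMap.proj (φ := fun _ => ResidueField R) i ∘ₗ v,
    inv_mul_cancel₀ hi⟩

/-- The minimal number of generators `ν(N)` of a finitely generated module `N` over a local ring,
encoded through Nakayama's lemma as the length of `N / 𝔪 N`. -/
noncomputable abbrev minGenerators (R N : Type*) [CommRing R] [IsLocalRing R] [AddCommGroup N]
    [Module R N] : ℕ∞ :=
  Module.length R (N ⧸ maximalIdeal R • (⊤ : Submodule R N))

lemma exists_minimal_cover (N : Type*) [AddCommGroup N] [Module R N] [Module.Finite R N] :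
    ∃ (n : ℕ) (p : (Fin n → R) →ₗ[R] N),
      minGenerators R N = n ∧
      Function.Surjective p ∧
      (maximalIdeal R • ⊤ : Submodule R N).comap p =
        LinearMap.range ((maximalIdeal R).subtype.compLeft (Fin n)) := by
  obtain ⟨n, ⟨e⟩⟩ := exists_linearEquiv_pi_residueField
    (Module.isTorsionBySet_quotient_ideal_smul N (maximalIdeal R))
  let reduce : (Fin n → R) →ₗ[R] (Fin n → ResidueField R) :=
    (Algebra.linearMap R (ResidueField R)).compLeft (Fin n)
  have hreduce : Function.Surjective reduce := IsLocalRing.residue_surjective.comp_left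
  have hker : LinearMap.ker (Algebra.linearMap R (ResidueField R)) = maximalIdeal R :=
    IsLocalRing.ker_residue
  obtain ⟨p, hp⟩ := Module.projective_lifting_property
    (maximalIdeal R • (⊤ : Submodule R N)).mkQ (e.symm ∘ₗ reduce) (Submodule.mkQ_surjective _)
  refine ⟨n, p, e.length_eq.trans (length_pi_residueField n), ?_, ?_⟩
  · rw [← LinearMap.range_eq_top, ← IsLocalRing.map_mkQ_eq_top, ← LinearMap.range_comp, hp,
      LinearMap.range_eq_top]
    exact e.symm.surjective.comp hreduce
  · calc (maximalIdeal R • ⊤ : Submodule R N).comap p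
        = LinearMap.ker (e.symm.toLinearMap ∘ₗ reduce) := by
          rw [← hp, LinearMap.ker_comp, Submodule.ker_mkQ]
      _ = Submodule.pi Set.univ fun _ => maximalIdeal R := by
          rw [LinearEquiv.ker_comp, LinearMap.ker_compLeft, hker]
      _ = LinearMap.range ((maximalIdeal R).subtype.compLeft (Fin n)) := by
          rw [LinearMap.range_compLeft, Submodule.range_subtype]

end ResidueField

section Count

variable {R : Type u} [CommRing R] [IsLocalRing R] {N A : Type u} [AddCommGroup N] [Module R N]
  [Module.Finite R N] [AddCommGroup A] [Module R A]

lemma ExtOneVanishes.length_linearMap_smul_top (h : ExtOneVanishes R N A) :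
    minGenerators R N * Module.length R A +
        Module.length R ((maximalIdeal R • ⊤ : Submodule R N) →ₗ[R] A) =
      minGenerators R N *
        Module.length R (maximalIdeal R →ₗ[R] A) + Module.length R (N →ₗ[R] A) := by
  obtain ⟨n, p, hn, hp, hcomap⟩ := exists_minimal_cover (R := R) N
  have hinj : Function.Injective ((maximalIdeal R).subtype.compLeft (Fin n)) :=
    (Submodule.injective_subtype _).comp_left
  have hcount := length_linearMap_add_length_map_linearMap hp (h.lcomp_subtype_ker_surjective hp)
    (p.ker_le_comap (p := maximalIdeal R • ⊤))
  rwa [Submodule.map_comap_eq_of_surjective hp, hcomap,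
    ← ((LinearEquiv.ofInjective _ hinj).congrLeft A R).length_eq, length_pi_linearMap,
    length_pi_linearMap, (LinearMap.ringLmapEquivSelf R R A).length_eq, Fintype.card_fin,
    ← hn] at hcount

end Count

section Pairing

variable {R M N : Type*} [CommRing R] [AddCommGroup M] [Module R M] [AddCommGroup N] [Module R N]
  {p : M →ₗ[R] N →ₗ[R] R}

lemma mem_torsionBySet_iff_pairing_smul_top_eq_zero (hp : Function.Injective p) {I : Ideal R}
    {x : M} : x ∈ Submodule.torsionBySet R M I ↔ ∀ y ∈ (I • ⊤ : Submodule R N), p x y = 0 := by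
  rw [Submodule.mem_torsionBySet_iff]
  constructor
  · intro hx
    suffices I • ⊤ ≤ LinearMap.ker (p x) from this
    refine Submodule.smul_le.2 fun a ha y _ => ?_
    rw [LinearMap.mem_ker, map_smul, ← LinearMap.smul_apply, ← map_smul, hx ⟨a, ha⟩, map_zero,
      LinearMap.zero_apply]
  · intro hx a
    refine (injective_iff_map_eq_zero p).1 hp _ (LinearMap.ext fun y => ?_)
    rw [map_smul, LinearMap.smul_apply, ← map_smul]
    exact hx _ (Submodule.smul_mem_smul a.2 trivial)

lemma smul_top_le_torsionBySet_of_pow_three_eq_bot (hp : Function.Injective p) {I : Ideal R}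
    (hpI : ∀ x y, p x y ∈ I) (hI : I ^ 3 = ⊥) : I • ⊤ ≤ Submodule.torsionBySet R M I := by
  refine Submodule.smul_le.2 fun a ha x _ => ?_
  rw [Submodule.mem_torsionBySet_iff]
  intro b
  refine (injective_iff_map_eq_zero p).1 hp _ (LinearMap.ext fun y => ?_)
  have hmem : (b : R) * (a * p x y) ∈ I ^ 3 :=
    pow_succ' I 2 ▸ Ideal.mul_mem_mul b.2 (sq I ▸ Ideal.mul_mem_mul ha (hpI x y))
  rw [hI] at hmem
  simpa using hmem

lemma length_torsionBySet_of_isPerfPair (p : M →ₗ[R] N →ₗ[R] R) [p.IsPerfPair] (I : Ideal R) :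
    Module.length R (Submodule.torsionBySet R M I) =
      Module.length R ((N ⧸ I • (⊤ : Submodule R N)) →ₗ[R] R) := by
  let S : Submodule R N := I • ⊤
  let ι : (N ⧸ S →ₗ[R] R) →ₗ[R] M := p.toPerfPair.symm.toLinearMap ∘ₗ LinearMap.lcomp R R S.mkQ
  have hι : Function.Injective ι := p.toPerfPair.symm.injective.comp
    (LinearMap.lcomp_injective_of_surjective _ S.mkQ_surjective)
  have hrange : LinearMap.range ι = Submodule.torsionBySet R M I := by
    ext x
    rw [mem_torsionBySet_iff_pairing_smul_top_eq_zero (LinearMap.IsPerfPair.bijective_left p).1,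
      LinearMap.range_comp, Submodule.mem_map_equiv, LinearEquiv.symm_symm, LinearMap.mem_range,
      ← Set.mem_range, ← LinearMap.exact_lcomp_of_exact_of_surjective R
      (LinearMap.exact_subtype_mkQ S) S.mkQ_surjective, LinearMap.ext_iff, Subtype.forall]
    rfl
  rw [← hrange, (LinearEquiv.ofInjective ι hι).length_eq]

section IsLocalRing

variable [IsLocalRing R]

lemma torsionBySet_le_smul_top_of_isPerfPair [Module.Finite R M] [p.IsPerfPair]
    {σ : ResidueField R →ₗ[R] R} (hσ : σ 1 ≠ 0)
    (hN : Submodule.torsionBySet R N (maximalIdeal R) ≤ maximalIdeal R • ⊤) :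
    Submodule.torsionBySet R M (maximalIdeal R) ≤ maximalIdeal R • ⊤ := by
  intro x hx
  by_contra hx'
  obtain ⟨φ, hφ⟩ := exists_linearMap_residueField_apply_eq_one hx'
  let y := p.flip.toPerfPair.symm (σ ∘ₗ φ)
  have hy (z : M) : p z y = σ (φ z) := p.apply_toPerfPair_flip (σ ∘ₗ φ) z
  have hy_mem : y ∈ Submodule.torsionBySet R N (maximalIdeal R) := by
    refine (Submodule.mem_torsionBySet_iff _ _).2 fun a => ?_
    rw [← map_smul, ← LinearMap.smul_comp,
      isTorsionBySet_linearMap (isTorsionBySet_residueField R), LinearMap.zero_comp, map_zero]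
  apply hσ
  rw [← hφ, ← hy]
  exact (mem_torsionBySet_iff_pairing_smul_top_eq_zero
    (LinearMap.IsPerfPair.bijective_left p).1).1 hx y (hN hy_mem)

lemma length_smul_top_of_isPerfPair [Module.Finite R N] [p.IsPerfPair]
    (hM : maximalIdeal R • ⊤ = Submodule.torsionBySet R M (maximalIdeal R)) :
    Module.length R (maximalIdeal R • ⊤ : Submodule R M) =
      minGenerators R N * Module.length R (ResidueField R →ₗ[R] R) := by
  rw [hM, length_torsionBySet_of_isPerfPair p, length_linearMap_of_isTorsionBySet_maximalIdeal
    (Module.isTorsionBySet_quotient_ideal_smul N (maximalIdeal R))]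

lemma length_eq_minGenerators_add [Module.Finite R N]
    (p : M →ₗ[R] N →ₗ[R] R) [p.IsPerfPair]
    (hM : maximalIdeal R • ⊤ = Submodule.torsionBySet R M (maximalIdeal R)) :
    Module.length R M = minGenerators R M +
      minGenerators R N * Module.length R (ResidueField R →ₗ[R] R) := by
  rw [length_eq_length_submodule_add_length_quotient (maximalIdeal R • (⊤ : Submodule R M)),
    length_smul_top_of_isPerfPair (p := p) hM, add_comm]

end IsLocalRing

end Pairing

section PerfectPairing

variable {R M : Type u} [CommRing R] [IsLocalRing R] [AddCommGroup M] [Module R M]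
  [Module.Finite R M]

lemma ExtOneVanishes.minGenerators_relation [IsNoetherianRing R] {N : Type*}
    [AddCommGroup N] [Module R N] [Module.Finite R N] (p : M →ₗ[R] N →ₗ[R] R) [p.IsPerfPair]
    (hExt : ExtOneVanishes R M R)
    (hM : maximalIdeal R • ⊤ = Submodule.torsionBySet R M (maximalIdeal R))
    (hN : maximalIdeal R • ⊤ = Submodule.torsionBySet R N (maximalIdeal R)) :
    minGenerators R M * Module.length R R +
        minGenerators R N * Module.length R (ResidueField R →ₗ[R] R) ^ 2 =
      minGenerators R M * Module.length R (maximalIdeal R →ₗ[R] R) +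
        (minGenerators R N + minGenerators R M * Module.length R (ResidueField R →ₗ[R] R)) := by
  have htors : Module.IsTorsionBySet R (maximalIdeal R • ⊤ : Submodule R M) (maximalIdeal R) := by
    rw [hM]
    exact Submodule.torsionBySet_isTorsionBySet _
  have hsmul := length_linearMap_of_isTorsionBySet_maximalIdeal htors R
  rw [length_smul_top_of_isPerfPair (p := p) hM, mul_assoc, ← sq] at hsmul
  rw [← hsmul, ← length_eq_minGenerators_add p.flip hN, p.flip.toPerfPair.length_eq]
  exact hExt.length_linearMap_smul_top

lemma add_mul_eq_add_mul_of_symm_relations {b c r s t : ℕ}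
    (hb : b * s + c * r ^ 2 = b * t + (c + b * r)) (hc : c * s + b * r ^ 2 = c * t + (b + c * r)) :
    b + c * r = c + b * r := by
  zify at *
  have hfactor : (r - 1) * ((r + 1) * ((c + b) * (c - b))) = (0 : ℤ) := by
    linear_combination c * hb - b * hc
  rcases mul_eq_zero.1 hfactor with hr | h
  · linear_combination (c - b) * hr
  · have hr : (r + 1 : ℤ) ≠ 0 := by positivity
    rcases mul_eq_zero.1 ((mul_eq_zero.1 h).resolve_left hr) with h | h
    · have : b = 0 := by lia
      have : c = 0 := by lia
      simp [*]
    · linear_combination (r - 1) * h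

lemma length_eq_length_of_isPerfPair [IsArtinianRing R] {N : Type u} [AddCommGroup N]
    [Module R N] [Module.Finite R N] (p : M →ₗ[R] N →ₗ[R] R) [p.IsPerfPair]
    (hExtM : ExtOneVanishes R M R) (hExtN : ExtOneVanishes R N R)
    (hM : maximalIdeal R • ⊤ = Submodule.torsionBySet R M (maximalIdeal R))
    (hN : maximalIdeal R • ⊤ = Submodule.torsionBySet R N (maximalIdeal R)) :
    Module.length R M = Module.length R N := by
  have hrelM := hExtM.minGenerators_relation p hM hN
  have hrelN := hExtN.minGenerators_relation p.flip hN hM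
  rw [length_eq_minGenerators_add p hM, length_eq_minGenerators_add p.flip hN]
  generalize hb : minGenerators R M = b at *
  generalize hc : minGenerators R N = c at *
  generalize hr : Module.length R (ResidueField R →ₗ[R] R) = r at *
  generalize hs : Module.length R R = s at *
  generalize ht : Module.length R (maximalIdeal R →ₗ[R] R) = t at *
  lift b to ℕ using hb ▸ Module.length_ne_top
  lift c to ℕ using hc ▸ Module.length_ne_top
  lift r to ℕ using hr ▸ Module.length_ne_top
  lift s to ℕ using hs ▸ Module.length_ne_top
  lift t to ℕ using ht ▸ Module.length_ne_top
  exact_mod_cast add_mul_eq_add_mul_of_symm_relations (by exact_mod_cast hrelM)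
    (by exact_mod_cast hrelN)

end PerfectPairing

section Retract

variable {R M Q : Type*} [CommRing R] [AddCommGroup M] [Module R M] [AddCommGroup Q] [Module R Q]
  {f : M →ₗ[R] Q} {g : Q →ₗ[R] M}

lemma exists_comp_subtype_ker_eq_id (hfg : f ∘ₗ g = .id) :
    ∃ π : M →ₗ[R] LinearMap.ker f, π ∘ₗ (LinearMap.ker f).subtype = .id := by
  have hf (x : Q) : f (g x) = x := LinearMap.congr_fun hfg x
  refine ⟨LinearMap.codRestrict _ (.id - g ∘ₗ f) fun x => by simp [hf], LinearMap.ext fun x => ?_⟩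
  exact Subtype.ext (by simp)

lemma length_dual_eq_of_retract (hfg : f ∘ₗ g = .id)
    (hQ : Module.length R (Module.Dual R Q) = Module.length R Q)
    (hK : Module.length R (Module.Dual R (LinearMap.ker f)) = Module.length R (LinearMap.ker f)) :
    Module.length R (Module.Dual R M) = Module.length R M := by
  obtain ⟨π, hπ⟩ := exists_comp_subtype_ker_eq_id hfg
  have hf : Function.Surjective f := LinearMap.surjective_of_comp_eq_id g f hfg
  have hext : Function.Surjective (LinearMap.lcomp R R (LinearMap.ker f).subtype) := fun φ =>
    ⟨φ ∘ₗ π, by rw [LinearMap.lcomp_apply', LinearMap.comp_assoc, hπ, LinearMap.comp_id]⟩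
  have hM : Module.length R M = Module.length R (LinearMap.ker f) + Module.length R Q :=
    Module.length_eq_add_of_exact _ f (LinearMap.ker f).injective_subtype hf f.exact_subtype_ker_map
  rw [hM, add_comm, ← hQ, ← hK]
  exact length_linearMap_eq_add_of_surjective hf hext

lemma length_ker_lt_of_comp_eq_id [IsArtinianRing R] [Module.Finite R M] [Nontrivial Q]
    (hfg : f ∘ₗ g = .id) : Module.length R (LinearMap.ker f) < Module.length R M :=
  Submodule.length_lt fun htop => by
    obtain ⟨x, hx⟩ := exists_ne (0 : Q)
    rw [LinearMap.ker_eq_top.1 htop, LinearMap.zero_comp] at hfg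
    exact hx (LinearMap.congr_fun hfg x).symm

lemma exists_retract_self_of_isUnit {f : M →ₗ[R] R} {x : M} (hx : IsUnit (f x)) :
    ∃ g : R →ₗ[R] M, f ∘ₗ g = .id := by
  obtain ⟨a, ha⟩ := hx.exists_left_inv
  exact ⟨LinearMap.toSpanSingleton R M (a • x), LinearMap.ext_ring (by simpa using ha)⟩

variable [IsLocalRing R]

lemma exists_retract_residueField [Module.Finite R M] {x : M}
    (hx : x ∈ Submodule.torsionBySet R M (maximalIdeal R))
    (hx' : x ∉ maximalIdeal R • (⊤ : Submodule R M)) :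
    ∃ (f : M →ₗ[R] ResidueField R) (g : ResidueField R →ₗ[R] M), f ∘ₗ g = .id := by
  obtain ⟨f, hf⟩ := exists_linearMap_residueField_apply_eq_one hx'
  have hker : maximalIdeal R ≤ LinearMap.ker (LinearMap.toSpanSingleton R M x) :=
    fun a ha => (Submodule.mem_torsionBySet_iff _ _).1 hx ⟨a, ha⟩
  refine ⟨f, (maximalIdeal R).liftQ _ hker, ?_⟩
  refine Submodule.linearMap_qext _ (LinearMap.ext_ring ?_)
  change f ((1 : R) • x) = 1
  rw [one_smul, hf]

variable (R) in
lemma length_dual_residueField_eq_one [IsNoetherianRing R] [Module.IsReflexive R (ResidueField R)] :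
    Module.length R (Module.Dual R (ResidueField R)) = 1 := by
  have hsq := length_linearMap_of_isTorsionBySet_maximalIdeal
    (isTorsionBySet_linearMap (isTorsionBySet_residueField R) R) R
  rw [← (Module.evalEquiv R (ResidueField R)).length_eq, length_residueField] at hsq
  exact eq_one_of_mul_left hsq.symm

variable (R) in
lemma exists_linearMap_residueField_apply_one_ne_zero [IsArtinianRing R] :
    ∃ σ : ResidueField R →ₗ[R] R, σ 1 ≠ 0 := by
  obtain ⟨I, hI⟩ := IsAtomic.exists_atom (Ideal R)
  obtain ⟨m, hm, ⟨e⟩⟩ := isSimpleModule_iff_quot_maximal.1 (isSimpleModule_iff_isAtom.2 hI)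
  obtain rfl := IsLocalRing.eq_maximalIdeal hm
  let σ : ResidueField R →ₗ[R] R := I.subtype ∘ₗ e.symm.toLinearMap
  have hσ : Function.Injective σ := I.injective_subtype.comp e.symm.injective
  exact ⟨σ, (map_ne_zero_iff σ hσ).2 one_ne_zero⟩

end Retract

lemma length_dual_eq_of_socle_le {R M : Type u} [CommRing R] [IsLocalRing R] [IsArtinianRing R]
    [AddCommGroup M] [Module R M] [Module.Finite R M] [Module.IsReflexive R M]
    (hm3 : maximalIdeal R ^ 3 = ⊥)
    (hM : ExtOneVanishes R M R) (hM' : ExtOneVanishes R (Module.Dual R M) R)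
    (hval : ∀ (f : Module.Dual R M) (x : M), f x ∈ maximalIdeal R)
    (hsoc : Submodule.torsionBySet R M (maximalIdeal R) ≤ maximalIdeal R • ⊤) :
    Module.length R (Module.Dual R M) = Module.length R M := by
  let p : Module.Dual R M →ₗ[R] M →ₗ[R] R := .id
  obtain ⟨σ, hσ⟩ := exists_linearMap_residueField_apply_one_ne_zero R
  have hdual : maximalIdeal R • ⊤ ≤ Submodule.torsionBySet R (Module.Dual R M) (maximalIdeal R) :=
    smul_top_le_torsionBySet_of_pow_three_eq_bot (LinearMap.IsPerfPair.bijective_left p).1 hval hm3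
  have hbidual : maximalIdeal R • ⊤ ≤ Submodule.torsionBySet R M (maximalIdeal R) :=
    smul_top_le_torsionBySet_of_pow_three_eq_bot (LinearMap.IsPerfPair.bijective_right p).1
      (fun x f => hval f x) hm3
  exact length_eq_length_of_isPerfPair p hM' hM
    (hdual.antisymm (torsionBySet_le_smul_top_of_isPerfPair (p := p) hσ hsoc))
    (hbidual.antisymm hsoc)

theorem stmt_8_general {R : Type u} [CommRing R] [IsNoetherianRing R] [IsLocalRing R]
    (hm3 : maximalIdeal R ^ 3 = ⊥) {M : Type u} [AddCommGroup M] [Module R M] [Module.Finite R M]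
    [Module.IsReflexive R M] (hM : ExtOneVanishes R M R)
    (hM' : ExtOneVanishes R (Module.Dual R M) R) :
    Module.length R (Module.Dual R M) = Module.length R M := by
  have : IsArtinianRing R := (isArtinianRing_iff_isNilpotent_maximalIdeal R).2 ⟨3, hm3⟩
  induction hn : Module.length R M using WellFoundedLT.induction generalizing M with | ind n ih
  subst hn
  have split_off {Q : Type u} [AddCommGroup Q] [Module R Q] [Nontrivial Q] {f : M →ₗ[R] Q}
      {g : Q →ₗ[R] M} (hfg : f ∘ₗ g = .id)
      (hQ : Module.length R (Module.Dual R Q) = Module.length R Q) :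
      Module.length R (Module.Dual R M) = Module.length R M := by
    obtain ⟨π, hπ⟩ := exists_comp_subtype_ker_eq_id hfg
    have : Module.IsReflexive R (LinearMap.ker f) := .of_split _ π hπ
    have hM'π := hM'.of_retract (LinearMap.ker f).subtype.dualMap π.dualMap
      (congrArg LinearMap.dualMap hπ)
    exact length_dual_eq_of_retract hfg hQ <|
      ih _ (length_ker_lt_of_comp_eq_id hfg) (hM.of_retract π _ hπ) hM'π rfl
  by_cases hval : ∀ (f : Module.Dual R M) (x : M), f x ∈ maximalIdeal R
  · by_cases hsoc : Submodule.torsionBySet R M (maximalIdeal R) ≤ maximalIdeal R • ⊤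
    · exact length_dual_eq_of_socle_le hm3 hM hM' hval hsoc
    · obtain ⟨x, hx, hx'⟩ := SetLike.not_le_iff_exists.1 hsoc
      obtain ⟨f, g, hfg⟩ := exists_retract_residueField hx hx'
      have : Module.IsReflexive R (ResidueField R) := .of_split g f hfg
      exact split_off hfg (by rw [length_dual_residueField_eq_one, length_residueField])
  · push Not at hval
    obtain ⟨f, x, hx⟩ := hval
    obtain ⟨g, hfg⟩ := exists_retract_self_of_isUnit (IsLocalRing.notMem_maximalIdeal.1 hx)
    exact split_off hfg (LinearMap.ringLmapEquivSelf R R R).length_eq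

/-- ℓ(M*) = ℓ(M). -/
theorem stmt_8 (R : Type) [CommRing R] [IsNoetherianRing R] [IsLocalRing R]
    (hng : ¬ IsGorensteinLocalRing R)
    (hm3 : (IsLocalRing.maximalIdeal R) ^ 3 = ⊥)
    (hm2 : (IsLocalRing.maximalIdeal R) ^ 2 ≠ ⊥)
    (M : Type) [AddCommGroup M] [Module R M] [Module.Finite R M]
    (hind : IsIndecomposableModule R M) (hnf : ¬ Module.Free R M)
    (hG : GDimZero R M) :
    mlength R (Module.Dual R M) = mlength R M := by
  have : Module.IsReflexive R M := ⟨hG.1⟩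
  simpa only [mlength, ← Module.coe_length] using
    congrArg _ (stmt_8_general hm3 (hG.2.1 1 one_pos) (hG.2.2 1 one_pos))
end

section
/- Let (R,m) be a non-Gorenstein Noetherian local ring with m³ = (0), m² ≠ (0), and let M be a nonfree indecomposable finitely generated R-module of G-dimension zero, minimally generated by b elements, with first syzygy ΩM ⊆ R^b from a minimal free cover R^b → M. Then mΩM = m²R^b, and ΩM is also minimally generated by b elements. -/
open CategoryTheory

/-!
Write `𝔪` for the maximal ideal, `K` for the kernel of a minimal cover `F → M` of rank `b`, and let
`G → K` be a minimal cover of rank `n`. The vanishing of `Ext¹(M, R)` and `Ext²(M, R)` says that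
functionals extend from `K` to `F` and from the next syzygy to `G`; hence `K` is reflexive and
`F* → K*` is a minimal cover.

Since `R` is not self-injective, some map `𝔪 → R` does not extend to `R`. This forces the socles of
`K` and `K*` into `𝔪 K` and `𝔪 K*`, and as `𝔪² M = 0` and `𝔪³ = 0` one gets `𝔪 K = 𝔪² F` and,
dually, `𝔪 K* ≅ 𝔪² G*`. Counting lengths in the duals of the covers `G → K` and `F* → K*` gives two
linear equations that are exchanged by `n ↔ b`. In their difference `n - b` has a positive
coefficient, because `ℓ(R) < ℓ(𝔪*) + ℓ((R/𝔪)*)`, so `n = b`.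
-/

section Ext

open Abelian

lemma subsingleton_ext_iff_abelianExt (R : Type*) [Ring R] {C : Type*} [Category C] [Abelian C]
    [Linear R C] [EnoughProjectives C] [HasExt C] (X Y : C) (n : ℕ) :
    Subsingleton (((Ext R C (n + 1)).obj (Opposite.op X)).obj Y) ↔
      Subsingleton (Abelian.Ext X Y (n + 1)) := by
  obtain ⟨P⟩ := HasProjectiveResolution.out (Z := X)
  have cocycle_iff : Subsingleton (((Ext R C (n + 1)).obj (Opposite.op X)).obj Y) ↔
      ∀ g : P.complex.X (n + 1) ⟶ Y, P.complex.d (n + 2) (n + 1) ≫ g = 0 →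
        ∃ h : P.complex.X n ⟶ Y, P.complex.d (n + 1) n ≫ h = g := by
    rw [← ModuleCat.isZero_iff_subsingleton, (P.isoExt (n + 1) Y).isZero_iff,
      ← HomologicalComplex.exactAt_iff_isZero_homology,
      HomologicalComplex.exactAt_iff' _ n (n + 1) (n + 2) (by simp) (by simp),
      ShortComplex.moduleCat_exact_iff]
    exact Iff.rfl
  rw [cocycle_iff]
  constructor
  · intro h
    refine subsingleton_of_forall_eq 0 fun e ↦ ?_
    obtain ⟨f, hf, rfl⟩ := P.extMk_surjective e (n + 2) rfl
    exact (P.extMk_eq_zero_iff f _ rfl hf n rfl).2 (h f hf)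
  · intro h g hg
    exact (P.extMk_eq_zero_iff g _ rfl hg n rfl).1 (Subsingleton.elim _ _)

universe u

variable {R : Type u} [CommRing R]

lemma isGorensteinLocalRing_of_injective (R : Type) [CommRing R] [IsNoetherianRing R]
    [IsLocalRing R] [Module.Injective R R] : IsGorensteinLocalRing R := by
  have := Module.injective_object_of_injective_module R R
  refine ⟨inferInstance, inferInstance, 0, fun N i hi ↦ ?_⟩
  obtain ⟨n, rfl⟩ := Nat.exists_eq_add_one.2 hi
  rw [subsingleton_ext_iff_abelianExt]
  exact Ext.subsingleton_of_injective N (ModuleCat.of R R) n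

section Syzygy

variable {X F : Type u} [AddCommGroup X] [Module R X] [AddCommGroup F] [Module R F]
  [Module.Projective R F] {p : F →ₗ[R] X}

lemma subsingleton_ext_one_iff (hp : Function.Surjective p)
    (N : Type u) [AddCommGroup N] [Module R N] :
    Subsingleton (Abelian.Ext (ModuleCat.of R X) (ModuleCat.of R N) 1) ↔
      Function.Surjective (LinearMap.lcomp R N (LinearMap.ker p).subtype) := by
  have hS := LinearMap.shortExact_shortComplexKer hp
  have : Projective p.shortComplexKer.X₂ := (IsProjective.iff_projective F).1 inferInstance
  have := hS.mono_f
  constructor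
  · intro (_ : Subsingleton (Ext p.shortComplexKer.X₃ _ 1)) f
    obtain ⟨e, he⟩ := Ext.contravariant_sequence_exact₁ hS (ModuleCat.of R N)
      (Ext.mk₀ (ModuleCat.ofHom f)) (add_zero 1) (Subsingleton.elim _ _)
    obtain ⟨g, rfl⟩ := (Ext.mk₀_bijective _ _).2 e
    rw [Ext.mk₀_comp_mk₀] at he
    exact ⟨g.hom, congrArg ModuleCat.Hom.hom ((Ext.mk₀_bijective _ _).1 he)⟩
  · refine fun h ↦ (subsingleton_of_forall_eq 0 fun e ↦ ?_ :
      Subsingleton (Ext p.shortComplexKer.X₃ _ 1))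
    obtain ⟨e₁, rfl⟩ := Ext.contravariant_sequence_exact₃ hS (ModuleCat.of R N) e
      (Ext.eq_zero_of_projective _) (add_zero 1)
    obtain ⟨f, rfl⟩ := (Ext.mk₀_bijective _ _).2 e₁
    obtain ⟨g, hg⟩ := h f.hom
    have hf : f = p.shortComplexKer.f ≫ ModuleCat.ofHom g := by
      ext x
      exact (LinearMap.congr_fun hg x).symm
    rw [hf, ← Ext.mk₀_comp_mk₀, hS.extClass_comp_assoc]

lemma subsingleton_ext_ker (hp : Function.Surjective p) (N : Type u) [AddCommGroup N] [Module R N]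
    (n : ℕ) [Subsingleton (Abelian.Ext (ModuleCat.of R X) (ModuleCat.of R N) (n + 2))] :
    Subsingleton (Abelian.Ext (ModuleCat.of R (LinearMap.ker p)) (ModuleCat.of R N) (n + 1)) := by
  have hS := LinearMap.shortExact_shortComplexKer hp
  have : Projective p.shortComplexKer.X₂ := (IsProjective.iff_projective F).1 inferInstance
  have : Subsingleton (Ext p.shortComplexKer.X₃ (ModuleCat.of R N) (n + 2)) := ‹_›
  refine (subsingleton_of_forall_eq 0 fun e ↦ ?_ :
    Subsingleton (Ext p.shortComplexKer.X₁ _ (n + 1)))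
  obtain ⟨e₂, rfl⟩ := Ext.contravariant_sequence_exact₁ hS (ModuleCat.of R N) e
    (by lia : 1 + (n + 1) = n + 2) (Subsingleton.elim _ _)
  rw [Ext.eq_zero_of_projective e₂, Ext.comp_zero]

end Syzygy

lemma subsingleton_ext_of_exact {X₁ X₂ X₃ : Type u} [AddCommGroup X₁] [Module R X₁]
    [AddCommGroup X₂] [Module R X₂] [AddCommGroup X₃] [Module R X₃] {f : X₁ →ₗ[R] X₂}
    {g : X₂ →ₗ[R] X₃} (hf : Function.Injective f) (hg : Function.Surjective g)
    (hfg : Function.Exact f g) (N : ModuleCat.{u} R) (n : ℕ)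
    [Subsingleton (Ext (ModuleCat.of R X₁) N n)] [Subsingleton (Ext (ModuleCat.of R X₃) N n)] :
    Subsingleton (Ext (ModuleCat.of R X₂) N n) := by
  let S : ShortComplex (ModuleCat.{u} R) :=
    .mk (ModuleCat.ofHom f) (ModuleCat.ofHom g) (by ext x; exact hfg.apply_apply_eq_zero x)
  have hS : S.ShortExact :=
    { exact := (ShortComplex.ShortExact.moduleCat_exact_iff_function_exact S).2 hfg
      mono_f := (ModuleCat.mono_iff_injective _).2 hf
      epi_g := (ModuleCat.epi_iff_surjective _).2 hg }
  refine subsingleton_of_forall_eq 0 fun e ↦ ?_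
  obtain ⟨e₃, rfl⟩ := Ext.contravariant_sequence_exact₂ hS N e (Subsingleton.elim _ _)
  rw [Subsingleton.elim e₃ 0, Ext.comp_zero]

lemma subsingleton_ext_one_of_surjective_lcomp_maximalIdeal [IsArtinianRing R] [IsLocalRing R]
    {Q : Type u} [AddCommGroup Q] [Module R Q]
    (hQ : Function.Surjective (LinearMap.lcomp R Q (IsLocalRing.maximalIdeal R).subtype))
    (N : Type u) [AddCommGroup N] [Module R N] [Module.Finite R N] :
    Subsingleton (Ext (ModuleCat.of R N) (ModuleCat.of R Q) 1) := by
  induction ‹Module.Finite R N› using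
    IsNoetherianRing.induction_on_isQuotientEquivQuotientPrime R with
  | subsingleton N =>
    have := (IsProjective.iff_projective (R := R) N).1 inferInstance
    exact Ext.subsingleton_of_projective (ModuleCat.of R N) (ModuleCat.of R Q) 0
  | quotient N P e =>
    have hP : P.asIdeal = IsLocalRing.maximalIdeal R :=
      IsLocalRing.eq_maximalIdeal (IsArtinianRing.isMaximal_of_isPrime P.asIdeal)
    have hker : LinearMap.ker (e.symm.toLinearMap ∘ₗ P.asIdeal.mkQ) =
        IsLocalRing.maximalIdeal R := by
      rw [LinearEquiv.ker_comp, Submodule.ker_mkQ, hP]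
    rw [subsingleton_ext_one_iff (p := e.symm.toLinearMap ∘ₗ P.asIdeal.mkQ)
      (e.symm.surjective.comp P.asIdeal.mkQ_surjective), hker]
    exact hQ
  | exact N₁ N₂ N₃ f g hf hg hfg h₁ h₃ => exact subsingleton_ext_of_exact hf hg hfg _ 1

lemma injective_of_surjective_lcomp_maximalIdeal [IsArtinianRing R] [IsLocalRing R]
    {Q : Type u} [AddCommGroup Q] [Module R Q]
    (hQ : Function.Surjective (LinearMap.lcomp R Q (IsLocalRing.maximalIdeal R).subtype)) :
    Module.Injective R Q := by
  refine Module.Baer.injective (Module.Baer.iff_surjective.2 fun I ↦ ?_)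
  have := subsingleton_ext_one_of_surjective_lcomp_maximalIdeal hQ (R ⧸ I)
  rwa [subsingleton_ext_one_iff I.mkQ_surjective, Submodule.ker_mkQ] at this

end Ext

section Dual

open Module

variable {R : Type*} [CommRing R] {F X : Type*} [AddCommGroup F] [Module R F]
  [AddCommGroup X] [Module R X] {I J : Ideal R}

lemma mem_smul_top_iff_forall_coord_mem {ι : Type*} (b : Basis ι R F) {x : F} :
    x ∈ I • (⊤ : Submodule R F) ↔ ∀ i, b.coord i x ∈ I := by
  refine ⟨fun hx i ↦ by simpa using Submodule.smul_top_le_comap_smul_top I (b.coord i) hx,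
    fun h ↦ ?_⟩
  rw [← b.linearCombination_repr x]
  exact Submodule.sum_mem _ fun i _ ↦ Submodule.smul_mem_smul (h i) Submodule.mem_top

lemma mem_smul_top_iff_forall_dual_apply_mem [Module.Free R F] {x : F} :
    x ∈ I • (⊤ : Submodule R F) ↔ ∀ f : Dual R F, f x ∈ I :=
  ⟨fun hx f ↦ by simpa using Submodule.smul_top_le_comap_smul_top I f hx,
    fun h ↦ (mem_smul_top_iff_forall_coord_mem (Free.chooseBasis R F)).2 fun _ ↦ h _⟩

lemma dual_mem_smul_top_iff_forall_apply_mem [Module.Free R F] [Module.Finite R F] {f : Dual R F} :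
    f ∈ I • (⊤ : Submodule R (Dual R F)) ↔ ∀ x, f x ∈ I := by
  rw [mem_smul_top_iff_forall_dual_apply_mem, ← (evalEquiv R F).forall_congr_right]
  rfl

lemma smul_top_eq_bot_of_forall_dual_apply_mem (hJI : J * I = ⊥)
    (hX : Function.Injective (Dual.eval R X)) (hI : ∀ (f : Dual R X) x, f x ∈ I) :
    J • (⊤ : Submodule R X) = ⊥ := by
  refine (Submodule.smul_le.2 fun a ha x _ ↦ (Submodule.mem_bot R).2 (hX ?_)).antisymm bot_le
  ext f
  simpa [hJI] using Ideal.mul_mem_mul ha (hI f x)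

lemma smul_top_dual_eq_bot_of_forall_apply_mem (hJI : J * I = ⊥)
    (hI : ∀ (f : Dual R X) x, f x ∈ I) : J • (⊤ : Submodule R (Dual R X)) = ⊥ := by
  refine (Submodule.smul_le.2 fun a ha f _ ↦ (Submodule.mem_bot R).2 ?_).antisymm bot_le
  ext x
  simpa [hJI] using Ideal.mul_mem_mul ha (hI f x)

lemma dual_apply_mem_of_le_smul_top {W : Submodule R F} (hW : W ≤ I • ⊤)
    (hres : Function.Surjective W.dualRestrict) (f : Dual R W) (x : W) : f x ∈ I := by
  obtain ⟨g, rfl⟩ := hres f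
  simpa using Submodule.smul_top_le_comap_smul_top I g (hW x.2)

lemma dualMap_exact_dualRestrict_ker {p : F →ₗ[R] X} (hp : Function.Surjective p) :
    Function.Exact p.dualMap (LinearMap.ker p).dualRestrict :=
  LinearMap.exact_lcomp_of_exact_of_surjective R (LinearMap.exact_subtype_ker_map p) hp

lemma surjective_dualRestrict_ker_dualRestrict {p : F →ₗ[R] X} (hp : Function.Surjective p)
    (hX : Function.Surjective (Dual.eval R X)) :
    Function.Surjective (LinearMap.ker (LinearMap.ker p).dualRestrict).dualRestrict := by
  intro φ
  have hker (f : Dual R X) : p.dualMap f ∈ LinearMap.ker (LinearMap.ker p).dualRestrict :=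
    (dualMap_exact_dualRestrict_ker hp).apply_apply_eq_zero f
  obtain ⟨x, hx⟩ := hX (φ ∘ₗ p.dualMap.codRestrict _ hker)
  obtain ⟨c, rfl⟩ := hp x
  refine ⟨Dual.eval R F c, ?_⟩
  ext ⟨g, hg⟩
  obtain ⟨f, rfl⟩ := (dualMap_exact_dualRestrict_ker hp g).1 hg
  exact LinearMap.congr_fun hx f

lemma isReflexive_ker [IsReflexive R F] {p : F →ₗ[R] X}
    (hX : Function.Injective (Dual.eval R X))
    (hres : Function.Surjective (LinearMap.ker p).dualRestrict) :
    IsReflexive R (LinearMap.ker p) := by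
  constructor
  constructor
  · rw [injective_iff_map_eq_zero]
    refine fun k hk ↦ Subtype.ext ((bijective_dual_eval R F).1 ?_)
    ext f
    simpa using LinearMap.congr_fun hk ((LinearMap.ker p).dualRestrict f)
  · intro ψ
    obtain ⟨c, hc⟩ := (bijective_dual_eval R F).2 (ψ ∘ₗ (LinearMap.ker p).dualRestrict)
    have hpc : p c = 0 := hX <| by
      ext g
      have hg : (LinearMap.ker p).dualRestrict (p.dualMap g) = 0 := by
        ext k
        simp
      simpa [hg] using LinearMap.congr_fun hc (p.dualMap g)
    refine ⟨⟨c, hpc⟩, ?_⟩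
    ext f
    obtain ⟨g, rfl⟩ := hres f
    exact LinearMap.congr_fun hc g

end Dual

section Length

open Module

variable {R : Type*} [CommRing R]

lemma length_dual_eq_add_of_exact {A B C : Type*} [AddCommGroup A] [Module R A] [AddCommGroup B]
    [Module R B] [AddCommGroup C] [Module R C] {f : A →ₗ[R] B} {g : B →ₗ[R] C}
    (hg : Function.Surjective g) (hfg : Function.Exact f g)
    (hf : Function.Surjective f.dualMap) :
    length R (Dual R B) = length R (Dual R C) + length R (Dual R A) :=
  length_eq_add_of_exact g.dualMap f.dualMap (LinearMap.dualMap_injective_of_surjective hg) hf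
    (LinearMap.exact_lcomp_of_exact_of_surjective R hfg hg)

lemma length_dual_lt_of_not_surjective_dualRestrict [IsArtinianRing R] {F : Type*}
    [AddCommGroup F] [Module R F] [Module.Finite R F] {W : Submodule R F}
    (hW : ¬ Function.Surjective W.dualRestrict) :
    length R (Dual R F) < length R (Dual R (F ⧸ W)) + length R (Dual R W) := by
  have hexact : Function.Exact W.mkQ.dualMap W.dualRestrict.rangeRestrict := by
    rw [LinearMap.exact_iff, LinearMap.ker_rangeRestrict, ← LinearMap.exact_iff]
    exact LinearMap.exact_lcomp_of_exact_of_surjective R (LinearMap.exact_subtype_mkQ W)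
      W.mkQ_surjective
  rw [length_eq_add_of_exact (P := W.dualRestrict.range) _ _
    (LinearMap.dualMap_injective_of_surjective W.mkQ_surjective)
    W.dualRestrict.surjective_rangeRestrict hexact]
  exact (ENat.add_lt_add_iff_left length_ne_top).2
    (Submodule.length_lt (mt LinearMap.range_eq_top.1 hW))

lemma isTorsionBySet_smul_top {I : Ideal R} {X : Type*} [AddCommGroup X] [Module R X]
    (hX : I ^ 2 • (⊤ : Submodule R X) = ⊥) : IsTorsionBySet R (I • ⊤ : Submodule R X) I := by
  rintro ⟨x, hx⟩ a
  have hax : (a : R) • x ∈ I ^ 2 • (⊤ : Submodule R X) := by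
    rw [pow_two, mul_smul]
    exact Submodule.smul_mem_smul a.2 hx
  exact Subtype.ext (by simpa [hX] using hax)

lemma length_dual_of_isTorsionBySet (I : Ideal R) [I.IsMaximal] (V : Type*) [AddCommGroup V]
    [Module R V] [Module.Finite R V] (hV : IsTorsionBySet R V I) :
    length R (Dual R V) = length R (Dual R (R ⧸ I)) * length R V := by
  let _ := hV.module
  let _ := Ideal.Quotient.field I
  have : IsScalarTower R (R ⧸ I) V := hV.isScalarTower
  have : Module.Finite (R ⧸ I) V := Module.Finite.of_restrictScalars_finite R _ V
  have : IsSimpleModule R (R ⧸ I) := isSimpleModule_iff_isCoatom.2 Ideal.IsMaximal.out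
  let e := ((finBasis (R ⧸ I) V).equivFun).restrictScalars R
  rw [e.length_eq, ← e.dualMap.length_eq, ← (LinearMap.lsum R _ R).length_eq]
  simp [length_pi_of_fintype, mul_comm]

section Free

variable {F : Type*} [AddCommGroup F] [Module R F] {ι : Type*} [Fintype ι]

/-- The submodule `I • F` of a free module `F` of finite rank, identified with `ι → I` by taking
coordinates. -/
noncomputable def smulTopEquivFun (b : Basis ι R F) (I : Ideal R) :
    (I • ⊤ : Submodule R F) ≃ₗ[R] (ι → I) :=
  .ofBijective
    (LinearMap.pi fun i ↦ (b.coord i).restrict fun _ hx ↦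
      (mem_smul_top_iff_forall_coord_mem b).1 hx i)
    ⟨fun _ _ hxy ↦ Subtype.ext <| b.ext_elem fun i ↦ congrArg Subtype.val (congrFun hxy i),
      fun c ↦ ⟨⟨b.equivFun.symm fun i ↦ c i,
        (mem_smul_top_iff_forall_coord_mem b).2 fun i ↦ by
          rw [b.coord_equivFun_symm]; exact (c i).2⟩,
        funext fun i ↦ Subtype.ext (b.coord_equivFun_symm i _)⟩⟩

variable (F) [Nontrivial R] [Module.Free R F] [Module.Finite R F] (I : Ideal R)

lemma length_dual_of_free : length R (Dual R F) = finrank R F * length R R := by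
  rw [length_of_free_of_finite (R := R) (M := Dual R F), finrank_linearMap_self]

lemma length_smul_top :
    length R (I • ⊤ : Submodule R F) = finrank R F * length R I := by
  rw [(smulTopEquivFun (Free.chooseBasis R F) I).length_eq, length_pi_of_fintype]
  simp [finrank_eq_card_chooseBasisIndex R F]

variable {F I} in
lemma length_smul_top_of_map_eq {N : Type*} [AddCommGroup N] [Module R N] {i : N →ₗ[R] F}
    {J : Ideal R} (hi : Function.Injective i) (h : (I • (⊤ : Submodule R N)).map i = J • ⊤) :
    length R (I • ⊤ : Submodule R N) = finrank R F * length R J := by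
  rw [(Submodule.equivMapOfInjective i hi _).length_eq, h, length_smul_top]

lemma length_dual_smul_top :
    length R (Dual R (I • ⊤ : Submodule R F)) = finrank R F * length R (Dual R I) := by
  rw [← (smulTopEquivFun (Free.chooseBasis R F) I).dualMap.length_eq,
    ← (LinearMap.lsum R _ R).length_eq, length_pi_of_fintype]
  simp [finrank_eq_card_chooseBasisIndex R F]

lemma length_quotient_smul_top :
    length R (F ⧸ (I • ⊤ : Submodule R F)) = finrank R F * length R (R ⧸ I) := by
  let b := Free.chooseBasis R F
  let φ : F →ₗ[R] Free.ChooseBasisIndex R F → R ⧸ I := LinearMap.pi fun i ↦ I.mkQ ∘ₗ b.coord i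
  have hφ : Function.Surjective φ :=
    I.mkQ_surjective.comp_left.comp b.equivFun.surjective
  have hker : LinearMap.ker φ = I • ⊤ := by
    ext x
    simp [φ, mem_smul_top_iff_forall_coord_mem b, LinearMap.ker_pi, LinearMap.ker_comp]
  rw [← hker, (φ.quotKerEquivOfSurjective hφ).length_eq, length_pi_of_fintype]
  simp [finrank_eq_card_chooseBasisIndex R F]

end Free

end Length

section MinimalCover

open Module IsLocalRing TensorProduct

variable {R : Type*} [CommRing R] [IsLocalRing R] {F X : Type*} [AddCommGroup F] [Module R F]
  [AddCommGroup X] [Module R X]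

/-- A linear surjection whose kernel is contained in `𝔪 F`. For `F` free of finite rank this is a
minimal free cover. -/
structure IsMinimalCover (q : F →ₗ[R] X) : Prop where
  surjective : Function.Surjective q
  ker_le : LinearMap.ker q ≤ maximalIdeal R • ⊤

variable (R X) in
lemma exists_isMinimalCover [Module.Finite R X] :
    ∃ (n : ℕ) (q : (Fin n → R) →ₗ[R] X), IsMinimalCover q := by
  let b := finBasis (ResidueField R) (ResidueField R ⊗[R] X)
  choose v hv using fun i ↦
    mk_surjective R X (ResidueField R) Ideal.Quotient.mk_surjective (b i)
  refine ⟨_, Fintype.linearCombination R v, ?_, fun c hc ↦ ?_⟩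
  · rw [← LinearMap.range_eq_top, Fintype.range_linearCombination]
    exact span_eq_top_of_tmul_eq_basis v b hv
  · have hsum : ∑ i, residue R (c i) • b i = 0 := by
      have := congrArg (TensorProduct.mk R (ResidueField R) X 1) hc
      simpa [Fintype.linearCombination_apply, hv, ← ResidueField.algebraMap_eq] using this
    refine (mem_smul_top_iff_forall_coord_mem (Pi.basisFun R _)).2 fun i ↦ ?_
    exact (residue_eq_zero_iff _).1 (Fintype.linearIndependent_iff.1 b.linearIndependent _ hsum i)

namespace IsMinimalCover

lemma length_quotient [Module.Free R F] [Module.Finite R F] {q : F →ₗ[R] X}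
    (hq : IsMinimalCover q) :
    length R (X ⧸ (maximalIdeal R • ⊤ : Submodule R X)) = finrank R F := by
  have hsurj : Function.Surjective ((maximalIdeal R • ⊤ : Submodule R X).mkQ ∘ₗ q) :=
    (Submodule.mkQ_surjective _).comp hq.surjective
  have hker : LinearMap.ker ((maximalIdeal R • ⊤ : Submodule R X).mkQ ∘ₗ q) =
      maximalIdeal R • ⊤ := by
    rw [LinearMap.ker_comp, Submodule.ker_mkQ,
      Submodule.comap_smul_top_of_surjective _ q hq.surjective, sup_eq_left.2 hq.ker_le]
  have : IsSimpleModule R (R ⧸ maximalIdeal R) :=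
    isSimpleModule_iff_isCoatom.2 (Ideal.IsMaximal.out (I := maximalIdeal R))
  rw [← (LinearMap.quotKerEquivOfSurjective _ hsurj).length_eq, hker, length_quotient_smul_top,
    length_eq_one, mul_one]

lemma dualRestrict_ker [Module.Free R F] [Module.Finite R F] {q : F →ₗ[R] X}
    (hq : IsMinimalCover q) (hres : Function.Surjective (LinearMap.ker q).dualRestrict)
    (hX : ∀ (f : Dual R X) x, f x ∈ maximalIdeal R) :
    IsMinimalCover (LinearMap.ker q).dualRestrict where
  surjective := hres
  ker_le f hf := by
    obtain ⟨g, rfl⟩ := (dualMap_exact_dualRestrict_ker hq.surjective f).1 hf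
    exact dual_mem_smul_top_iff_forall_apply_mem.2 fun x ↦ hX g (q x)

lemma torsionBySet_le [Module.Free R F] {q : F →ₗ[R] X} (hq : IsMinimalCover q)
    (hres : Function.Surjective (LinearMap.ker q).dualRestrict)
    (hR : ¬ Function.Surjective (maximalIdeal R).dualRestrict) :
    Submodule.torsionBySet R X (maximalIdeal R) ≤ maximalIdeal R • ⊤ := by
  -- If `y = q c` is killed by `𝔪` but `f c` is a unit, then any `φ : 𝔪 → R` extends to `R`: extend
  -- the functional `φ ∘ f` from `ker q` to `F` and evaluate it on the multiples of `c`.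
  intro y hy
  obtain ⟨c, rfl⟩ := hq.surjective y
  by_contra hc
  obtain ⟨f, hf⟩ : ∃ f : Dual R F, f c ∉ maximalIdeal R := by
    by_contra! h
    exact hc (Submodule.smul_top_le_comap_smul_top _ q
      (mem_smul_top_iff_forall_dual_apply_mem.2 h))
  obtain ⟨u, hu⟩ : IsUnit (f c) := by simpa using hf
  refine hR fun φ ↦ ?_
  have hfker (k : LinearMap.ker q) : f k ∈ maximalIdeal R :=
    mem_smul_top_iff_forall_dual_apply_mem.1 (hq.ker_le k.2) f
  obtain ⟨g, hg⟩ := hres (φ ∘ₗ (f.domRestrict (LinearMap.ker q)).codRestrict _ hfker)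
  refine ⟨LinearMap.toSpanSingleton R R (↑u⁻¹ * g c), ?_⟩
  ext a
  have hac : (a : R) • c ∈ LinearMap.ker q := by
    simpa using (Submodule.mem_torsionBySet_iff _ _).1 hy a
  have hga : (a : R) * g c = f c * φ a := by
    have hfa : (⟨f ((a : R) • c), hfker ⟨_, hac⟩⟩ : maximalIdeal R) = f c • a :=
      Subtype.ext (by simp [mul_comm])
    calc (a : R) * g c = g ((a : R) • c) := by simp
      _ = φ ⟨f ((a : R) • c), _⟩ := LinearMap.congr_fun hg ⟨_, hac⟩
      _ = f c * φ a := by rw [hfa, map_smul, smul_eq_mul]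
  calc (a : R) * (↑u⁻¹ * g c) = ↑u⁻¹ * (a * g c) := by ring
    _ = φ a := by rw [hga, ← hu, Units.inv_mul_cancel_left]

lemma length_dual [IsNoetherianRing R] [Module.Free R F] [Module.Finite R F] {q : F →ₗ[R] X}
    (hq : IsMinimalCover q) (hres : Function.Surjective (LinearMap.ker q).dualRestrict)
    (hX : maximalIdeal R ^ 2 • (⊤ : Submodule R X) = ⊥) :
    finrank R F * length R (Dual R (maximalIdeal R)) + length R (Dual R X) =
      length R (Dual R (R ⧸ maximalIdeal R)) * length R (maximalIdeal R • ⊤ : Submodule R X) +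
        finrank R F * length R R := by
  -- Functionals on `ker q` extend to `F`, so both `0 → ker q → F → X → 0` and
  -- `0 → ker q → 𝔪 F → 𝔪 X → 0` stay exact after dualizing; eliminate the dual of `ker q`.
  have : Module.Finite R X := Module.Finite.of_surjective q hq.surjective
  let i : LinearMap.ker q →ₗ[R] (maximalIdeal R • ⊤ : Submodule R F) :=
    Submodule.inclusion hq.ker_le
  let p : (maximalIdeal R • ⊤ : Submodule R F) →ₗ[R] (maximalIdeal R • ⊤ : Submodule R X) :=
    q.restrict (Submodule.smul_top_le_comap_smul_top _ q)
  have hi : Function.Surjective i.dualMap := fun f ↦ by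
    obtain ⟨g, rfl⟩ := hres f
    exact ⟨g.domRestrict _, rfl⟩
  have hp : Function.Surjective p := by
    rintro ⟨y, hy⟩
    rw [← LinearMap.range_eq_top.2 hq.surjective, LinearMap.range_eq_map, ← Submodule.map_smul'']
      at hy
    obtain ⟨x, hx, rfl⟩ := hy
    exact ⟨⟨x, hx⟩, rfl⟩
  have hip : Function.Exact i p := fun x ↦
    ⟨fun hx ↦ ⟨⟨x, congrArg Subtype.val hx⟩, rfl⟩, by rintro ⟨k, rfl⟩; exact Subtype.ext k.2⟩
  have hdual : finrank R F * length R R =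
      length R (Dual R X) + length R (Dual R (LinearMap.ker q)) := by
    rw [← length_dual_eq_add_of_exact hq.surjective (LinearMap.exact_subtype_ker_map q) hres,
      length_dual_of_free]
  rw [hdual, ← length_dual_smul_top F, length_dual_eq_add_of_exact hp hip hi,
    length_dual_of_isTorsionBySet _ _ (isTorsionBySet_smul_top hX)]
  ring

end IsMinimalCover

lemma map_smul_top_eq_of_exact {N : Type*} [AddCommGroup N] [Module R N] {i : N →ₗ[R] F}
    {p : F →ₗ[R] X} (hip : Function.Exact i p) (hi : Function.Injective i)
    (hp : LinearMap.ker p ≤ maximalIdeal R • ⊤) (hm3 : maximalIdeal R ^ 3 = ⊥)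
    (hX : maximalIdeal R ^ 2 • (⊤ : Submodule R X) = ⊥)
    (hN : Submodule.torsionBySet R N (maximalIdeal R) ≤ maximalIdeal R • ⊤) :
    (maximalIdeal R • (⊤ : Submodule R N)).map i = maximalIdeal R ^ 2 • ⊤ := by
  refine le_antisymm ?_ fun z hz ↦ ?_
  · rw [Submodule.map_smul'', Submodule.map_top, ← hip.linearMap_ker_eq, pow_two, mul_smul]
    exact Submodule.smul_mono le_rfl hp
  · have hpz : p z ∈ maximalIdeal R ^ 2 • (⊤ : Submodule R X) :=
      Submodule.smul_top_le_comap_smul_top _ p hz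
    obtain ⟨y, rfl⟩ := (hip z).1 (by simpa [hX] using hpz)
    refine ⟨y, hN ((Submodule.mem_torsionBySet_iff _ _).2 fun a ↦ hi ?_), rfl⟩
    have : (a : R) • i y ∈ maximalIdeal R ^ 3 • (⊤ : Submodule R F) := by
      rw [pow_succ', mul_smul]
      exact Submodule.smul_mem_smul a.2 hz
    simpa [hm3] using this

lemma IsMinimalCover.smul_ker_eq {p : F →ₗ[R] X} (hp : IsMinimalCover p)
    (hm3 : maximalIdeal R ^ 3 = ⊥) (hinj : Function.Injective (Dual.eval R X))
    (hX : ∀ (f : Dual R X) x, f x ∈ maximalIdeal R)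
    (hsoc : Submodule.torsionBySet R (LinearMap.ker p) (maximalIdeal R) ≤ maximalIdeal R • ⊤) :
    maximalIdeal R • LinearMap.ker p = maximalIdeal R ^ 2 • ⊤ := by
  have hm2X : maximalIdeal R ^ 2 • (⊤ : Submodule R X) = ⊥ :=
    smul_top_eq_bot_of_forall_dual_apply_mem (by rw [← pow_succ, hm3]) hinj hX
  simpa only [Submodule.map_smul'', Submodule.map_subtype_top] using
    map_smul_top_eq_of_exact (LinearMap.exact_subtype_ker_map p) (Submodule.subtype_injective _)
      hp.ker_le hm3 hm2X hsoc

lemma IsMinimalCover.map_dualMap_smul_top [Module.Free R F] [Module.Finite R F] {q : F →ₗ[R] X}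
    (hq : IsMinimalCover q) (hres : Function.Surjective (LinearMap.ker q).dualRestrict)
    (hm3 : maximalIdeal R ^ 3 = ⊥) (hX : ∀ (f : Dual R X) x, f x ∈ maximalIdeal R)
    (hsoc : Submodule.torsionBySet R (Dual R X) (maximalIdeal R) ≤ maximalIdeal R • ⊤) :
    (maximalIdeal R • (⊤ : Submodule R (Dual R X))).map q.dualMap = maximalIdeal R ^ 2 • ⊤ := by
  have hm2ker : maximalIdeal R ^ 2 • (⊤ : Submodule R (Dual R (LinearMap.ker q))) = ⊥ :=
    smul_top_dual_eq_bot_of_forall_apply_mem (by rw [← pow_succ, hm3])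
      (dual_apply_mem_of_le_smul_top hq.ker_le hres)
  exact map_smul_top_eq_of_exact (dualMap_exact_dualRestrict_ker hq.surjective)
    (LinearMap.dualMap_injective_of_surjective hq.surjective)
    (hq.dualRestrict_ker hres hX).ker_le hm3 hm2ker hsoc

end MinimalCover

section Comparison

open Module IsLocalRing

variable {R : Type*} [CommRing R] [IsLocalRing R]

lemma IsMinimalCover.length_eq_finrank_add {F X : Type*} [AddCommGroup F] [Module R F]
    [Module.Free R F] [Module.Finite R F] [AddCommGroup X] [Module R X] {q : F →ₗ[R] X}
    (hq : IsMinimalCover q) :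
    length R X = finrank R F + length R (maximalIdeal R • ⊤ : Submodule R X) := by
  rw [← hq.length_quotient, add_comm]
  exact length_eq_add_of_exact _ _ (Submodule.subtype_injective _) (Submodule.mkQ_surjective _)
    (LinearMap.exact_subtype_mkQ _)

-- `b` and `n` are the ranks of the covers of a syzygy's dual and of the syzygy; `L`, `N`, `r`, `h`
-- are the lengths of `R`, `Dual R 𝔪`, `Dual R (R ⧸ 𝔪)` and `𝔪 ^ 2`.
lemma eq_of_length_equations {b n L N r h : ℕ} (hL : L < N + r) (hh : 0 < h)
    (h₁ : n * N + (b + n * h) = r * (b * h) + n * L)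
    (h₂ : b * N + (n + b * h) = r * (n * h) + b * L) : n = b := by
  zify at *
  have hfactor : ((n : ℤ) - b) * (N - L + r * h + h - 1) = 0 := by linear_combination h₁ - h₂
  have hpos : (0 : ℤ) < N - L + r * h + h - 1 := by nlinarith
  exact sub_eq_zero.1 ((mul_eq_zero.1 hfactor).resolve_right hpos.ne')

lemma finrank_eq_of_isMinimalCover_dual [IsArtinianRing R] {G F' K : Type*}
    [AddCommGroup G] [Module R G] [Module.Free R G] [Module.Finite R G]
    [AddCommGroup F'] [Module R F'] [Module.Free R F'] [Module.Finite R F']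
    [AddCommGroup K] [Module R K] [IsReflexive R K] {q : G →ₗ[R] K} {q' : F' →ₗ[R] Dual R K}
    (hq : IsMinimalCover q) (hq' : IsMinimalCover q')
    (hres : Function.Surjective (LinearMap.ker q).dualRestrict)
    (hres' : Function.Surjective (LinearMap.ker q').dualRestrict)
    (hR : ¬ Function.Surjective (maximalIdeal R).dualRestrict) (hm2 : maximalIdeal R ^ 2 ≠ ⊥)
    (hK : maximalIdeal R ^ 2 • (⊤ : Submodule R K) = ⊥)
    (hK' : maximalIdeal R ^ 2 • (⊤ : Submodule R (Dual R K)) = ⊥)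
    (hlen : length R (maximalIdeal R • ⊤ : Submodule R K) =
      finrank R F' * length R (maximalIdeal R ^ 2 : Ideal R))
    (hlen' : length R (maximalIdeal R • ⊤ : Submodule R (Dual R K)) =
      finrank R G * length R (maximalIdeal R ^ 2 : Ideal R)) :
    finrank R G = finrank R F' := by
  have hpos : 0 < length R (maximalIdeal R ^ 2 : Ideal R) := by
    rwa [length_pos_iff, Submodule.nontrivial_iff_ne_bot]
  have hlt := length_dual_lt_of_not_surjective_dualRestrict hR
  have h₁ := hq.length_dual hres hK
  have h₂ := hq'.length_dual hres' hK'
  rw [hq'.length_eq_finrank_add, hlen, hlen'] at h₁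
  rw [← (evalEquiv R K).length_eq, hq.length_eq_finrank_add, hlen, hlen'] at h₂
  rw [length_dual_of_free, finrank_self, Nat.cast_one, one_mul, add_comm] at hlt
  lift length R R to ℕ using length_ne_top with L
  lift length R (Dual R (maximalIdeal R)) to ℕ using length_ne_top with N
  lift length R (Dual R (R ⧸ maximalIdeal R)) to ℕ using length_ne_top with r
  lift length R (maximalIdeal R ^ 2 : Ideal R) to ℕ using length_ne_top with h
  norm_cast at hlt hpos h₁ h₂
  exact eq_of_length_equations hlt hpos h₁ h₂

theorem IsMinimalCover.finrank_eq_of_isReflexive [IsArtinianRing R] {F G X : Type*}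
    [AddCommGroup F] [Module R F] [Module.Free R F] [Module.Finite R F]
    [AddCommGroup G] [Module R G] [Module.Free R G] [Module.Finite R G]
    [AddCommGroup X] [Module R X] [IsReflexive R X] {p : F →ₗ[R] X}
    {q : G →ₗ[R] LinearMap.ker p} (hp : IsMinimalCover p) (hq : IsMinimalCover q)
    (hresp : Function.Surjective (LinearMap.ker p).dualRestrict)
    (hresq : Function.Surjective (LinearMap.ker q).dualRestrict)
    (hR : ¬ Function.Surjective (maximalIdeal R).dualRestrict)
    (hm3 : maximalIdeal R ^ 3 = ⊥) (hm2 : maximalIdeal R ^ 2 ≠ ⊥)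
    (hX : ∀ (f : Dual R X) x, f x ∈ maximalIdeal R) :
    finrank R G = finrank R F := by
  obtain ⟨hinj, hsurj⟩ := bijective_dual_eval R X
  have : IsReflexive R (LinearMap.ker p) := isReflexive_ker hinj hresp
  have hK := dual_apply_mem_of_le_smul_top hp.ker_le hresp
  have hp' := hp.dualRestrict_ker hresp hX
  have hresp' := surjective_dualRestrict_ker_dualRestrict hp.surjective hsurj
  have hm : maximalIdeal R ^ 2 * maximalIdeal R = ⊥ := by rw [← pow_succ, hm3]
  have hlen : length R (maximalIdeal R • ⊤ : Submodule R (LinearMap.ker p)) =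
      finrank R (Dual R F) * length R (maximalIdeal R ^ 2 : Ideal R) := by
    rw [finrank_linearMap_self]
    refine length_smul_top_of_map_eq (Submodule.subtype_injective _) ?_
    rw [Submodule.map_smul'', Submodule.map_subtype_top,
      hp.smul_ker_eq hm3 hinj hX (hq.torsionBySet_le hresq hR)]
  have hlen' : length R (maximalIdeal R • ⊤ : Submodule R (Dual R (LinearMap.ker p))) =
      finrank R G * length R (maximalIdeal R ^ 2 : Ideal R) := by
    rw [length_smul_top_of_map_eq (LinearMap.dualMap_injective_of_surjective hq.surjective)
      (hq.map_dualMap_smul_top hresq hm3 hK (hp'.torsionBySet_le hresp' hR)),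
      finrank_linearMap_self]
  rw [finrank_eq_of_isMinimalCover_dual hq hp' hresq hresp' hR hm2
    (smul_top_eq_bot_of_forall_dual_apply_mem hm (bijective_dual_eval R _).1 hK)
    (smul_top_dual_eq_bot_of_forall_apply_mem hm hK) hlen hlen', finrank_linearMap_self]

end Comparison

lemma isCompl_ker_span_singleton {R M : Type*} [CommRing R] [AddCommGroup M] [Module R M]
    {f : Module.Dual R M} {x : M} (hx : IsUnit (f x)) :
    IsCompl (LinearMap.ker f) (Submodule.span R {x}) := by
  obtain ⟨u, hu⟩ := hx
  refine ⟨Submodule.disjoint_def.2 fun y hy hyx ↦ ?_,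
    Submodule.codisjoint_iff_exists_add_eq.2 fun y ↦ ⟨y - (f y * ↑u⁻¹) • x, (f y * ↑u⁻¹) • x, ?_,
      Submodule.smul_mem _ _ (Submodule.mem_span_singleton_self x), sub_add_cancel _ _⟩⟩
  · obtain ⟨c, rfl⟩ := Submodule.mem_span_singleton.1 hyx
    have hc : c = 0 := by simpa [← hu] using hy
    rw [hc, zero_smul]
  · simp [← hu]

lemma IsIndecomposableModule.dual_apply_mem_maximalIdeal {R M : Type} [CommRing R]
    [IsLocalRing R] [AddCommGroup M] [Module R M] (hind : IsIndecomposableModule R M)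
    (hnf : ¬ Module.Free R M) (f : Module.Dual R M) (x : M) :
    f x ∈ IsLocalRing.maximalIdeal R := by
  by_contra hfx
  have hu : IsUnit (f x) := by simpa using hfx
  rcases hind.2 _ _ (isCompl_ker_span_singleton hu) with hker | hspan
  · have hf : Function.Surjective f := fun r ↦ ⟨(r * ↑hu.unit⁻¹) • x, by simp [mul_assoc]⟩
    exact hnf (.of_equiv (LinearEquiv.ofBijective f ⟨LinearMap.ker_eq_bot.1 hker, hf⟩).symm)
  · rw [Submodule.span_singleton_eq_bot] at hspan
    exact hfx (by simp [hspan])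

section General

open Module IsLocalRing

universe u

theorem stmt_10_general {R M F : Type u} [CommRing R] [IsNoetherianRing R] [IsLocalRing R]
    (hR : ¬ Module.Injective R R) (hm3 : maximalIdeal R ^ 3 = ⊥)
    (hm2 : maximalIdeal R ^ 2 ≠ ⊥)
    [AddCommGroup M] [Module R M] [IsReflexive R M]
    (hM : ∀ (f : Dual R M) (x : M), f x ∈ maximalIdeal R)
    [Subsingleton (Abelian.Ext (ModuleCat.of R M) (ModuleCat.of R R) 1)]
    [Subsingleton (Abelian.Ext (ModuleCat.of R M) (ModuleCat.of R R) 2)]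
    [AddCommGroup F] [Module R F] [Module.Free R F] [Module.Finite R F] {p : F →ₗ[R] M}
    (hp : IsMinimalCover p) :
    maximalIdeal R • LinearMap.ker p = maximalIdeal R ^ 2 • ⊤ ∧
      length R
          (LinearMap.ker p ⧸ (maximalIdeal R • ⊤ : Submodule R (LinearMap.ker p))) =
        finrank R F := by
  have : IsArtinianRing R := (isArtinianRing_iff_isNilpotent_maximalIdeal R).2 ⟨3, hm3⟩
  obtain ⟨n, q, hq⟩ := exists_isMinimalCover R (LinearMap.ker p)
  have := subsingleton_ext_ker hp.surjective R 0
  have hresp := (subsingleton_ext_one_iff hp.surjective R).1 inferInstance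
  have hresq := (subsingleton_ext_one_iff hq.surjective R).1 inferInstance
  have hmax := mt injective_of_surjective_lcomp_maximalIdeal hR
  refine ⟨hp.smul_ker_eq hm3 (bijective_dual_eval R M).1 hM
    (hq.torsionBySet_le hresq hmax), ?_⟩
  rw [hq.length_quotient, hp.finrank_eq_of_isReflexive hq hresp hresq hmax hm3 hm2 hM]

end General

/-- for a minimal free cover π : R^b → M with syzygy ΩM = ker π,
one has m·ΩM = m²·R^b, and ΩM is minimally generated by b elements. -/
theorem stmt_10 (R : Type) [CommRing R] [IsNoetherianRing R] [IsLocalRing R]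
    (hng : ¬ IsGorensteinLocalRing R)
    (hm3 : (IsLocalRing.maximalIdeal R) ^ 3 = ⊥)
    (hm2 : (IsLocalRing.maximalIdeal R) ^ 2 ≠ ⊥)
    (M : Type) [AddCommGroup M] [Module R M] [Module.Finite R M]
    (hind : IsIndecomposableModule R M) (hnf : ¬ Module.Free R M)
    (hG : GDimZero R M)
    (b : ℕ) (π : (Fin b → R) →ₗ[R] M) (hsurj : Function.Surjective π)
    (hmin : LinearMap.ker π ≤ (IsLocalRing.maximalIdeal R) • (⊤ : Submodule R (Fin b → R))) :
    (IsLocalRing.maximalIdeal R) • (LinearMap.ker π) =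
      ((IsLocalRing.maximalIdeal R) ^ 2) • (⊤ : Submodule R (Fin b → R)) ∧
    mlength R ((↥(LinearMap.ker π)) ⧸
      ((IsLocalRing.maximalIdeal R) • (⊤ : Submodule R ↥(LinearMap.ker π)))) = (b : ℕ∞) := by
  obtain ⟨hrefl, hExt, -⟩ := hG
  have : Module.IsReflexive R M := ⟨hrefl⟩
  have := (subsingleton_ext_iff_abelianExt R _ _ 0).1 (hExt 1 one_pos)
  have := (subsingleton_ext_iff_abelianExt R _ _ 1).1 (hExt 2 two_pos)
  have hninj : ¬ Module.Injective R R := fun _ ↦ hng (isGorensteinLocalRing_of_injective R)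
  obtain ⟨hsyz, hlength⟩ := stmt_10_general hninj hm3 hm2
    (hind.dual_apply_mem_maximalIdeal hnf) ⟨hsurj, hmin⟩
  rw [Module.finrank_fin_fun] at hlength
  exact ⟨hsyz, by rw [mlength, ← Module.coe_length, hlength]⟩
end
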